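/- arXiv:1407.5394 — 3 statements merged into one kernel-verified Lean document; each statement's English description precedes it below -/
import Mathlib

section
/- Let X be a normal topological space and E ⊆ X be a subspace that is metrizable, arcwise connected, locally arcwise connected, separable, and simultaneously an F_σ-set and a G_δ-set in X. Then E is a B₁-retract of X. -/
/-!
Extend the identity of `E` to `f : X → E` by a constant outside `E`. Because `E` is metrizable and
both `E` and its complement are Fσ in `X`, the preimage under `f` of every open and of every closed
set is Fσ (`isFsigma_preimage_extend`). The theorem therefore follows from
`isBaireOne_of_isFsigma_preimage`: a map with this property from a normal space into a separable,
path-connected and locally path-connected metric space `Y` is Baire-one.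

To prove the latter, one builds finer and finer approximations (`ApproxLevel`). At each level there
are countably many small path-connected open sets `U j` with marked points `y j`, and continuous
maps `g m : X → Y` such that `g m` is constantly `y j` near a closed set `C j m`; every point `x`
lies, for some `j` with `f x ∈ U j`, in `C j m` for all large `m`, so that eventually `g m x` is
close to `f x`. To refine a level (`ApproxLevel.refine`), cover each `U j` by countably many smaller
path-connected open subsets and make this cover disjoint; the corresponding pieces of `X` are
preimages of intersections of an open and a closed set, hence are exhausted by closed sets. Only
finitely many disjoint closed pieces matter for each `m`, so Urysohn functions allow `g m` to be
moved near each of them along a path inside `U j` from `y j` to the new marked point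
(`exists_modify_finite`). The change is at most the size of `U j`, hence the changes are summable
over the levels and the diagonal sequence converges to `f`.
-/

/-- A function between topological spaces is *Baire-one* if it is a pointwise limit of a
sequence of continuous functions. -/
def IsBaireOne {X Y : Type*} [TopologicalSpace X] [TopologicalSpace Y] (f : X → Y) : Prop :=
  ∃ g : ℕ → X → Y, (∀ n, Continuous (g n)) ∧
    ∀ x, Filter.Tendsto (fun n => g n x) Filter.atTop (nhds (f x))

/-- A subset `E` of a topological space `X` is a *B₁-retract* of `X` if there exists a
Baire-one function `r : X → E` such that `r x = x` for all `x ∈ E`. -/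
def IsB1Retract {X : Type*} [TopologicalSpace X] (E : Set X) : Prop :=
  ∃ r : X → E, IsBaireOne r ∧ ∀ x (hx : x ∈ E), (r x : X) = x

/-- A subset of a topological space is an *Fσ-set* if it is a countable union of closed sets. -/
def IsFsigma {X : Type*} [TopologicalSpace X] (s : Set X) : Prop :=
  ∃ F : ℕ → Set X, (∀ n, IsClosed (F n)) ∧ s = ⋃ n, F n

open Set Filter Topology

/-! ### Fσ-sets -/

section Fsigma

variable {X : Type*} [TopologicalSpace X]

theorem IsFsigma.inter {s t : Set X} (hs : IsFsigma s) (ht : IsFsigma t) : IsFsigma (s ∩ t) := by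
  obtain ⟨F, hF, rfl⟩ := hs
  obtain ⟨G, hG, rfl⟩ := ht
  refine ⟨fun n => F n.unpair.1 ∩ G n.unpair.2, fun n => (hF _).inter (hG _), ?_⟩
  ext x
  simp only [mem_inter_iff, mem_iUnion]
  constructor
  · rintro ⟨⟨i, hi⟩, j, hj⟩
    exact ⟨Nat.pair i j, by simpa using ⟨hi, hj⟩⟩
  · rintro ⟨n, h1, h2⟩
    exact ⟨⟨_, h1⟩, _, h2⟩

theorem IsFsigma.union {s t : Set X} (hs : IsFsigma s) (ht : IsFsigma t) : IsFsigma (s ∪ t) := by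
  obtain ⟨F, hF, rfl⟩ := hs
  obtain ⟨G, hG, rfl⟩ := ht
  exact ⟨fun n => F n ∪ G n, fun n => (hF _).union (hG _), iUnion_union_distrib F G |>.symm⟩

theorem IsClosed.isFsigma {s : Set X} (hs : IsClosed s) : IsFsigma s :=
  ⟨fun _ => s, fun _ => hs, (iUnion_const s).symm⟩

theorem IsGδ.isFsigma_compl {s : Set X} (hs : IsGδ s) : IsFsigma sᶜ := by
  obtain ⟨f, hf, rfl⟩ := isGδ_iff_eq_iInter_nat.1 hs
  exact ⟨fun n => (f n)ᶜ, fun n => (hf n).isClosed_compl, compl_iInter f⟩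

/-- An Fσ-set is exhausted by closed subsets. -/
theorem IsFsigma.exists_exhaustion {s : Set X} (hs : IsFsigma s) :
    ∃ Z : ℕ → Set X, (∀ n, IsClosed (Z n)) ∧ (∀ n, Z n ⊆ s) ∧
      ∀ x ∈ s, ∀ᶠ n in atTop, x ∈ Z n := by
  obtain ⟨F, hF, rfl⟩ := hs
  refine ⟨fun n => ⋃ i ∈ Iic n, F i, fun n => (finite_Iic n).isClosed_biUnion fun i _ => hF i,
    fun n => iUnion₂_subset fun i _ => subset_iUnion F i, fun x hx => ?_⟩
  obtain ⟨i, hi⟩ := mem_iUnion.1 hx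
  filter_upwards [eventually_ge_atTop i] with n hn
  exact mem_biUnion (mem_Iic.2 hn) hi

theorem IsFsigma.image_val {E : Set X} (hE : IsFsigma E) {T : Set E} (hT : IsFsigma T) :
    IsFsigma (Subtype.val '' T) := by
  obtain ⟨F, hF, rfl⟩ := hT
  choose K hK hKF using fun n => isClosed_induced_iff.1 (hF n)
  have : Subtype.val '' (⋃ n, F n) = E ∩ ⋃ n, K n := by
    simp only [← hKF, ← preimage_iUnion, Subtype.image_preimage_coe]
  rw [this]
  exact hE.inter ⟨K, hK, rfl⟩

open Classical in
theorem isFsigma_preimage_extend {E : Set X} (hE : IsFsigma E) (hE' : IsGδ E) (e : E)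
    {T : Set E} (hT : IsFsigma T) :
    IsFsigma ((fun x => if h : x ∈ E then (⟨x, h⟩ : E) else e) ⁻¹' T) := by
  have h1 := hE.image_val hT
  by_cases he : e ∈ T
  · convert h1.union hE'.isFsigma_compl using 1
    ext x
    by_cases hx : x ∈ E <;> simp [hx, he]
  · convert h1 using 1
    ext x
    by_cases hx : x ∈ E <;> simp [hx, he]

end Fsigma

/-! ### Moving a continuous map along paths -/

section Modification

variable {X Y : Type*} [TopologicalSpace X] [NormalSpace X] [TopologicalSpace Y]

/-- A continuous map that is constant on an open set `W` can be moved along a path, inside `W`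
only, so as to take the other endpoint of the path near a given closed subset of `W`. -/
theorem exists_modify {g : X → Y} (hg : Continuous g) {D W : Set X} (hD : IsClosed D)
    (hW : IsOpen W) (hDW : D ⊆ W) {U : Set Y} {a b : Y} (hab : JoinedIn U a b)
    (hgW : ∀ x ∈ W, g x = a) :
    ∃ g' : X → Y, Continuous g' ∧ (∀ x ∈ D, ∀ᶠ z in 𝓝 x, g' z = b) ∧
      (∀ x ∉ W, g' x = g x) ∧ ∀ x ∈ W, g' x ∈ U := by
  classical
  obtain ⟨O₂, hO₂, hDO₂, hO₂W⟩ := normal_exists_closure_subset hD hW hDW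
  obtain ⟨O₁, hO₁, hDO₁, hO₁O₂⟩ := normal_exists_closure_subset hD hO₂ hDO₂
  obtain ⟨φ, hφ0, hφ1, hφ⟩ := exists_continuous_zero_one_of_isClosed (s := O₂ᶜ) (t := closure O₁)
    hO₂.isClosed_compl isClosed_closure
    (disjoint_left.2 fun x hx hx' => hx (hO₁O₂ hx'))
  let γ := hab.somePath
  let ψ : X → Y := fun x => γ ⟨φ x, hφ x⟩
  have hψ : Continuous ψ := γ.continuous.comp (φ.continuous.subtype_mk hφ)
  have hψ0 : ∀ x ∉ O₂, ψ x = a := by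
    intro x hx
    have : (⟨φ x, hφ x⟩ : unitInterval) = 0 := Subtype.ext (hφ0 hx)
    simp only [ψ, this, γ.source]
  have hψ1 : ∀ x ∈ O₁, ψ x = b := by
    intro x hx
    have : (⟨φ x, hφ x⟩ : unitInterval) = 1 := Subtype.ext (hφ1 (subset_closure hx))
    simp only [ψ, this, γ.target]
  refine ⟨fun x => if x ∈ W then ψ x else g x, continuous_iff_continuousAt.2 fun x => ?_,
    fun x hx => ?_, fun x hx => if_neg hx, fun x hx => ?_⟩
  · by_cases hx : x ∈ W
    · refine hψ.continuousAt.congr ?_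
      filter_upwards [hW.mem_nhds hx] with z hz
      rw [if_pos hz]
    · have hx' : x ∈ (closure O₂)ᶜ := fun h => hx (hO₂W h)
      refine hg.continuousAt.congr ?_
      filter_upwards [isClosed_closure.isOpen_compl.mem_nhds hx'] with z hz
      split_ifs with hzW
      · rw [hgW z hzW, hψ0 z fun h => hz (subset_closure h)]
      · rfl
  · filter_upwards [hO₁.mem_nhds (hDO₁ hx), hW.mem_nhds (hDW hx)] with z hz hzW
    rw [if_pos hzW, hψ1 z hz]
  · simp only [if_pos hx]
    exact hab.somePath_mem _

theorem exists_modify_of_disjoint_open {g : X → Y} (hg : Continuous g) {D W : ℕ → Set X}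
    {U : ℕ → Set Y} {a b : ℕ → Y} (N : ℕ) (hD : ∀ i < N, IsClosed (D i))
    (hW : ∀ i < N, IsOpen (W i)) (hDW : ∀ i < N, D i ⊆ W i)
    (hdisj : ∀ i < N, ∀ j < N, i ≠ j → Disjoint (W i) (W j))
    (hab : ∀ i < N, JoinedIn (U i) (a i) (b i)) (hgW : ∀ i < N, ∀ x ∈ W i, g x = a i) :
    ∃ g' : X → Y, Continuous g' ∧ (∀ i < N, ∀ x ∈ D i, ∀ᶠ z in 𝓝 x, g' z = b i) ∧
      (∀ x, (∀ i < N, x ∉ W i) → g' x = g x) ∧ ∀ i < N, ∀ x ∈ W i, g' x ∈ U i := by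
  induction N with
  | zero => exact ⟨g, hg, by simp, by simp, by simp⟩
  | succ N ih =>
    have hlt : ∀ i < N, i < N + 1 := fun i hi => by omega
    obtain ⟨g₁, hg₁, h1, h2, h3⟩ := ih (fun i hi => hD i (hlt i hi)) (fun i hi => hW i (hlt i hi))
      (fun i hi => hDW i (hlt i hi)) (fun i hi j hj => hdisj i (hlt i hi) j (hlt j hj))
      (fun i hi => hab i (hlt i hi)) (fun i hi => hgW i (hlt i hi))
    have hdN : ∀ i < N, ∀ x ∈ W i, x ∉ W N := fun i hi x hx =>
      disjoint_left.1 (hdisj i (hlt i hi) N (by omega) (by omega)) hx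
    obtain ⟨g₂, hg₂, k1, k2, k3⟩ := exists_modify hg₁ (hD N (by omega)) (hW N (by omega))
      (hDW N (by omega)) (hab N (by omega)) (fun x hx => by
        rw [h2 x fun i hi hxi => hdN i hi x hxi hx]
        exact hgW N (by omega) x hx)
    refine ⟨g₂, hg₂, fun i hi x hx => ?_, fun x hx => ?_, fun i hi x hx => ?_⟩
    · rcases Nat.lt_succ_iff_lt_or_eq.1 hi with hi' | rfl
      · filter_upwards [h1 i hi' x hx, (hW i hi).mem_nhds (hDW i hi hx)] with z hz hzW
        rw [k2 z (hdN i hi' z hzW), hz]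
      · exact k1 x hx
    · rw [k2 x (hx N (by omega)), h2 x fun i hi => hx i (hlt i hi)]
    · rcases Nat.lt_succ_iff_lt_or_eq.1 hi with hi' | rfl
      · rw [k2 x (hdN i hi' x hx)]
        exact h3 i hi' x hx
      · exact k3 x hx

/-- Simultaneous modification near finitely many disjoint closed sets: a value `a i` is only ever
replaced by values in `U i`. -/
theorem exists_modify_finite {g : X → Y} (hg : Continuous g) {D : ℕ → Set X}
    {U : ℕ → Set Y} {a b : ℕ → Y} (N : ℕ) (hD : ∀ i < N, IsClosed (D i))
    (hdisj : ∀ i < N, ∀ j < N, i ≠ j → Disjoint (D i) (D j))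
    (hab : ∀ i < N, JoinedIn (U i) (a i) (b i))
    (hgD : ∀ i < N, ∀ x ∈ D i, ∀ᶠ z in 𝓝 x, g z = a i) :
    ∃ g' : X → Y, Continuous g' ∧ (∀ i < N, ∀ x ∈ D i, ∀ᶠ z in 𝓝 x, g' z = b i) ∧
      ∀ x, g' x = g x ∨ ∃ i < N, g x = a i ∧ g' x ∈ U i := by
  have hd : (Iio N).PairwiseDisjoint fun i => 𝓝ˢ (D i) := fun i hi j hj hij =>
    (separatedNhds_iff_disjoint.1 (normal_separation (hD i hi) (hD j hj) (hdisj i hi j hj hij)))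
  obtain ⟨V, hV, hVd⟩ := hd.exists_mem_filter_basis (finite_Iio N) (fun i => hasBasis_nhdsSet (D i))
  have hWg : ∀ i, ∀ x ∈ interior {z | g z = a i} ∩ V i, g x = a i := fun i x hx =>
    interior_subset (s := {z | g z = a i}) hx.1
  obtain ⟨g', hg', h1, h2, h3⟩ := exists_modify_of_disjoint_open hg
    (W := fun i => interior {z | g z = a i} ∩ V i) N hD
    (fun i _ => isOpen_interior.inter (hV i).1)
    (fun i hi x hx => ⟨mem_interior_iff_mem_nhds.2 (hgD i hi x hx), (hV i).2 hx⟩)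
    (fun i hi j hj hij => (hVd hi hj hij).mono inter_subset_right inter_subset_right)
    hab (fun i _ => hWg i)
  refine ⟨g', hg', h1, fun x => ?_⟩
  by_cases hx : ∃ i < N, x ∈ interior {z | g z = a i} ∩ V i
  · obtain ⟨i, hi, hxi⟩ := hx
    exact Or.inr ⟨i, hi, hWg i x hxi, h3 i hi x hxi⟩
  · push Not at hx
    exact Or.inl (h2 x hx)

end Modification

/-! ### Successive approximation -/

section Approximation

variable {X Y : Type*} [TopologicalSpace X] [MetricSpace Y]

/-- The continuous maps `g m` approximate `f` with precision `δ`: there are path-connected open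
sets `U j` of size at most `δ` with marked points `y j`, and closed sets `C j m`, pairwise disjoint
for each `m`, such that `g m` equals `y j` near `C j m` and each `x` eventually belongs to `C j m`
for some `j` with `f x ∈ U j`. For each `m` only the finitely many indices `j < m` are constrained.
The precision is an extended number so that `U j` may be all of an unbounded space `Y`. -/
structure ApproxLevel (f : X → Y) (δ : ENNReal) (g : ℕ → X → Y) (U : ℕ → Set Y) (y : ℕ → Y)
    (C : ℕ → ℕ → Set X) : Prop where
  isOpen : ∀ j, IsOpen (U j)
  isPathConnected : ∀ j, IsPathConnected (U j)
  mem : ∀ j, y j ∈ U j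
  small : ∀ j, ∀ a ∈ U j, ∀ b ∈ U j, edist a b ≤ δ
  continuous : ∀ m, Continuous (g m)
  isClosed : ∀ m, ∀ j < m, IsClosed (C j m)
  disjoint : ∀ m, ∀ i < m, ∀ j < m, i ≠ j → Disjoint (C i m) (C j m)
  eventually_eq : ∀ m, ∀ j < m, ∀ x ∈ C j m, ∀ᶠ z in 𝓝 x, g m z = y j
  cover : ∀ x, ∃ j, f x ∈ U j ∧ ∀ᶠ m in atTop, x ∈ C j m

theorem ApproxLevel.eventually_edist_le {f : X → Y} {δ : ENNReal} {g : ℕ → X → Y} {U : ℕ → Set Y}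
    {y : ℕ → Y} {C : ℕ → ℕ → Set X} (h : ApproxLevel f δ g U y C) (x : X) :
    ∀ᶠ m in atTop, edist (g m x) (f x) ≤ δ := by
  obtain ⟨j, hj, hx⟩ := h.cover x
  filter_upwards [hx, eventually_gt_atTop j] with m hm hjm
  rw [(h.eventually_eq m j hjm x hm).self_of_nhds]
  exact h.small j _ (h.mem j) _ hj

/-- The coarsest level: the constant sequence, with the whole (path-connected) space as the only
open set. -/
theorem ApproxLevel.initial [PathConnectedSpace Y] (f : X → Y) (y₀ : Y) :
    ApproxLevel f ⊤ (fun _ _ => y₀) (fun _ => univ) (fun _ => y₀)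
      (fun j _ => if j = 0 then univ else ∅) where
  isOpen _ := isOpen_univ
  isPathConnected _ := isPathConnected_univ
  mem _ := mem_univ _
  small _ _ _ _ _ := le_top
  continuous _ := continuous_const
  isClosed _ j _ := by split_ifs <;> simp
  disjoint _ i _ j _ hij := by
    split_ifs <;> simp
    omega
  eventually_eq _ _ _ _ _ := Eventually.of_forall fun _ => rfl
  cover x := ⟨0, mem_univ _, by simp⟩

theorem exists_cover_isPathConnected [SecondCountableTopology Y] [LocallyPathConnectedSpace Y]
    {U : Set Y} (hU : IsOpen U) (hne : U.Nonempty) {ε : ENNReal} (hε : 0 < ε) :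
    ∃ V : ℕ → Set Y, (∀ k, IsOpen (V k) ∧ IsPathConnected (V k) ∧ V k ⊆ U ∧
      ∀ a ∈ V k, ∀ b ∈ V k, edist a b ≤ ε) ∧ ⋃ k, V k = U := by
  let S : Set (Set Y) := {V | IsOpen V ∧ IsPathConnected V ∧ V ⊆ U ∧
      ∀ a ∈ V, ∀ b ∈ V, edist a b ≤ ε}
  have hS : ⋃₀ S = U := by
    refine Subset.antisymm (sUnion_subset fun V hV => hV.2.2.1) fun x hx => ?_
    have hε2 : 0 < ε / 2 := ENNReal.half_pos hε.ne'
    obtain ⟨V, ⟨hVo, hxV, hVp⟩, hVU⟩ := (isOpen_isPathConnected_basis x).mem_iff.1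
      (inter_mem (hU.mem_nhds hx) (Metric.eball_mem_nhds x hε2))
    refine mem_sUnion.2 ⟨V, ⟨hVo, hVp, fun z hz => (hVU hz).1, fun a ha b hb => ?_⟩, hxV⟩
    calc edist a b ≤ edist a x + edist b x := edist_triangle_right a b x
      _ ≤ ε / 2 + ε / 2 := add_le_add (hVU ha).2.le (hVU hb).2.le
      _ = ε := ENNReal.add_halves ε
  obtain ⟨T, hTc, hTS, hTU⟩ := TopologicalSpace.isOpen_sUnion_countable S fun V hV => hV.1
  rw [hS] at hTU
  have hTne : T.Nonempty := by
    obtain ⟨x, hx⟩ := hne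
    rw [← hTU] at hx
    obtain ⟨V, hV, -⟩ := hx
    exact ⟨V, hV⟩
  obtain ⟨V, rfl⟩ := hTc.exists_eq_range hTne
  exact ⟨V, fun k => hTS (mem_range_self k), by rw [← hTU, sUnion_range]⟩

theorem ApproxLevel.refine [NormalSpace X] [SecondCountableTopology Y] [LocallyPathConnectedSpace Y]
    {f : X → Y} (hfo : ∀ T : Set Y, IsOpen T → IsFsigma (f ⁻¹' T))
    (hfc : ∀ T : Set Y, IsClosed T → IsFsigma (f ⁻¹' T))
    {δ : ENNReal} {g : ℕ → X → Y} {U : ℕ → Set Y} {y : ℕ → Y} {C : ℕ → ℕ → Set X}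
    (h : ApproxLevel f δ g U y C) {ε : ENNReal} (hε : 0 < ε) :
    ∃ g' U' y' C', ApproxLevel f ε g' U' y' C' ∧ ∀ m x, edist (g m x) (g' m x) ≤ δ := by
  choose V hV hVU using fun j => exists_cover_isPathConnected (h.isOpen j) ⟨_, h.mem j⟩ hε
  choose v hv using fun j k => (hV j k).2.1.nonempty
  -- The disjointed cover of `U j`; each of its members is an open set minus a closed one.
  let S : ℕ → ℕ → Set Y := fun j k => V j k ∩ (⋃ i ∈ Iio k, V j i)ᶜ
  have hSd : ∀ j k l, k < l → Disjoint (S j k) (S j l) := fun j k l hkl =>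
    disjoint_left.2 fun z hz hz' => hz'.2 (mem_biUnion (mem_Iio.2 hkl) hz.1)
  have hSσ : ∀ j k, IsFsigma (f ⁻¹' S j k) := fun j k =>
    (hfo _ (hV j k).1).inter
      (hfc _ (isOpen_biUnion fun i _ => (hV j i).1).isClosed_compl)
  choose Z hZc hZS hZx using fun j k => (hSσ j k).exists_exhaustion
  -- The index `p` of the new level encodes the pair `(j, k)`.
  let D : ℕ → ℕ → Set X := fun p m => C p.unpair.1 m ∩ Z p.unpair.1 p.unpair.2 m
  have hle : ∀ {p m : ℕ}, p < m → p.unpair.1 < m := fun hp => (Nat.unpair_left_le _).trans_lt hp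
  have hDc : ∀ m, ∀ p < m, IsClosed (D p m) := fun m p hp =>
    (h.isClosed m _ (hle hp)).inter (hZc _ _ _)
  have hDd : ∀ m, ∀ p < m, ∀ q < m, p ≠ q → Disjoint (D p m) (D q m) := by
    intro m p hp q hq hpq
    by_cases hj : p.unpair.1 = q.unpair.1
    · have hk : p.unpair.2 ≠ q.unpair.2 := fun hk => hpq (by
        rw [← Nat.pair_unpair p, ← Nat.pair_unpair q, hj, hk])
      have hS : Disjoint (S p.unpair.1 p.unpair.2) (S q.unpair.1 q.unpair.2) := by
        rw [hj]
        rcases lt_or_gt_of_ne hk with hk | hk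
        · exact hSd _ _ _ hk
        · exact (hSd _ _ _ hk).symm
      exact (hS.preimage f).mono (inter_subset_right.trans (hZS _ _ _))
        (inter_subset_right.trans (hZS _ _ _))
    · exact (h.disjoint m _ (hle hp) _ (hle hq) hj).mono inter_subset_left inter_subset_left
  have hvU : ∀ j k, v j k ∈ U j := fun j k => (hV j k).2.2.1 (hv j k)
  choose g' hg' hg'D hgg' using fun m => exists_modify_finite (h.continuous m)
    (D := fun p => D p m) (U := fun p => U p.unpair.1) (a := fun p => y p.unpair.1)
    (b := fun p => v p.unpair.1 p.unpair.2) m (hDc m) (hDd m)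
    (fun p _ => (h.isPathConnected _).joinedIn _ (h.mem _) _ (hvU _ _))
    (fun p hp x hx => h.eventually_eq m _ (hle hp) x hx.1)
  refine ⟨g', fun p => V p.unpair.1 p.unpair.2, fun p => v p.unpair.1 p.unpair.2, D,
    ⟨fun p => (hV _ _).1, fun p => (hV _ _).2.1, fun p => hv _ _, fun p => (hV _ _).2.2.2, hg', hDc,
      hDd, hg'D, fun x => ?_⟩, fun m x => ?_⟩
  · classical
    obtain ⟨j, hj, hxC⟩ := h.cover x
    have hex : ∃ k, f x ∈ V j k := by
      rw [← hVU j] at hj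
      exact mem_iUnion.1 hj
    have hxS : f x ∈ S j (Nat.find hex) := by
      refine ⟨Nat.find_spec hex, fun hmem => ?_⟩
      obtain ⟨i, hi, hxi⟩ := mem_iUnion₂.1 hmem
      exact Nat.find_min hex hi hxi
    refine ⟨Nat.pair j (Nat.find hex), by simpa using hxS.1, ?_⟩
    filter_upwards [hxC, hZx j _ x hxS] with m h1 h2
    simpa [D] using ⟨h1, h2⟩
  · rcases hgg' m x with heq | ⟨p, -, hp, hp'⟩
    · rw [heq, edist_self]
      exact zero_le
    · rw [hp]
      exact h.small _ _ (h.mem _) _ hp'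

/-- A map from a normal space to a separable, path-connected and locally path-connected metric
space is Baire-one as soon as the preimages of open sets are both Fσ and Gδ (the latter being
expressed through preimages of closed sets). -/
theorem isBaireOne_of_isFsigma_preimage [NormalSpace X] [SecondCountableTopology Y]
    [PathConnectedSpace Y] [LocallyPathConnectedSpace Y]
    {f : X → Y} (hfo : ∀ T : Set Y, IsOpen T → IsFsigma (f ⁻¹' T))
    (hfc : ∀ T : Set Y, IsClosed T → IsFsigma (f ⁻¹' T)) : IsBaireOne f := by
  obtain ⟨y₀⟩ : Nonempty Y := inferInstance
  let δ : ℕ → ENNReal := fun n => ENNReal.ofReal ((1 / 2) ^ n)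
  have hδ : ∀ n, 0 < δ n := fun n => ENNReal.ofReal_pos.2 (by positivity)
  let P : ℕ → (ℕ → X → Y) → Prop := fun n g => ∃ U y C, ApproxLevel f (δ n) g U y C
  obtain ⟨g₀, hg₀⟩ : ∃ g, P 0 g := by
    obtain ⟨g, U, y, C, h, -⟩ := (ApproxLevel.initial f y₀).refine hfo hfc (hδ 0)
    exact ⟨g, U, y, C, h⟩
  have step : ∀ n, ∀ g : {g // P n g}, ∃ g' : {g // P (n + 1) g},
      ∀ m x, edist (g.1 m x) (g'.1 m x) ≤ δ n := by
    rintro n ⟨g, U, y, C, h⟩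
    obtain ⟨g', U', y', C', h', hd⟩ := h.refine hfo hfc (hδ (n + 1))
    exact ⟨⟨g', U', y', C', h'⟩, hd⟩
  choose next hnext using step
  let G : ∀ n, {g // P n g} := fun n => Nat.rec ⟨g₀, hg₀⟩ next n
  have hG : ∀ n m x, dist ((G n).1 m x) ((G (n + 1)).1 m x) ≤ (1 / 2) ^ n := fun n m x =>
    (edist_le_ofReal (by positivity)).1 (hnext n (G n) m x)
  have hGk : ∀ n k m x, dist ((G n).1 m x) ((G (n + k)).1 m x)
      ≤ 2 * (1 / 2) ^ n - 2 * (1 / 2) ^ (n + k) := by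
    intro n k m x
    induction k with
    | zero => simp
    | succ k ih =>
      have h1 := hG (n + k) m x
      have h2 := dist_triangle ((G n).1 m x) ((G (n + k)).1 m x) ((G (n + (k + 1))).1 m x)
      have h3 : ((1 : ℝ) / 2) ^ (n + (k + 1)) = (1 / 2) ^ (n + k) / 2 := by
        rw [← add_assoc, pow_succ]
        ring
      rw [← add_assoc] at h2 h3 ⊢
      rw [h3]
      linarith
  refine ⟨fun m => (G m).1 m, fun m => ?_, fun x => ?_⟩
  · obtain ⟨U, y, C, h⟩ := (G m).2
    exact h.continuous m
  · refine Metric.tendsto_atTop'.2 fun ε hε => ?_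
    obtain ⟨n, hn⟩ := exists_pow_lt_of_lt_one (show 0 < ε / 3 by positivity)
      (show (1 : ℝ) / 2 < 1 by norm_num)
    obtain ⟨U, y, C, h⟩ := (G n).2
    obtain ⟨M, hM⟩ := eventually_atTop.1 (h.eventually_edist_le x)
    refine ⟨max M n, fun m hm => ?_⟩
    have h1 : dist ((G n).1 m x) (f x) ≤ (1 / 2) ^ n :=
      (edist_le_ofReal (by positivity)).1 (hM m ((le_max_left M n).trans hm.le))
    have h2 := hGk n (m - n) m x
    rw [Nat.add_sub_cancel' ((le_max_right M n).trans hm.le)] at h2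
    have h3 := dist_triangle_left ((G m).1 m x) (f x) ((G n).1 m x)
    have h4 : (0 : ℝ) < (1 / 2) ^ m := by positivity
    linarith

end Approximation

theorem b1_retract_of_separable_ambiguous {X : Type*} [TopologicalSpace X]
    [T1Space X] [NormalSpace X] (E : Set X)
    (hmetr : TopologicalSpace.MetrizableSpace E)
    (harc : PathConnectedSpace E) (hlocarc : LocPathConnectedSpace E)
    (hsep : TopologicalSpace.SeparableSpace E)
    (hFsigma : IsFsigma E) (hGdelta : IsGδ E) :
    IsB1Retract E := by
  classical
  have : LocallyPathConnectedSpace E := hlocarc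
  let : MetricSpace E := TopologicalSpace.metrizableSpaceMetric E
  have : SecondCountableTopology E := UniformSpace.secondCountable_of_separable E
  obtain ⟨e⟩ : Nonempty E := inferInstance
  refine ⟨fun x => if h : x ∈ E then ⟨x, h⟩ else e,
    isBaireOne_of_isFsigma_preimage (fun T hT => ?_)
      (fun T hT => isFsigma_preimage_extend hFsigma hGdelta e hT.isFsigma), fun x hx => by simp [hx]⟩
  obtain ⟨F, hF, -, hFT, -⟩ := hT.exists_iUnion_isClosed
  exact isFsigma_preimage_extend hFsigma hGdelta e ⟨F, hF, hFT.symm⟩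
end

section
/- Let X be a collectionwise normal topological space and E ⊆ X be a subspace that is metrizable, arcwise connected, locally arcwise connected, and simultaneously an F_σ-set and a G_δ-set in X. Then E is a B₁-retract of X. -/
/-- A family of sets is *discrete* if every point has a neighbourhood meeting at most one
member of the family. -/
def DiscreteFamily {X : Type*} [TopologicalSpace X] {ι : Type*} (F : ι → Set X) : Prop :=
  ∀ x : X, ∃ U ∈ nhds x, {i : ι | (F i ∩ U).Nonempty}.Subsingleton

/-- A topological space is *collectionwise normal* if it is T₁ and every discrete family of
closed sets can be expanded to a discrete family of open sets. -/
def CollectionwiseNormal (X : Type u) [TopologicalSpace X] : Prop :=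
  T1Space X ∧ ∀ (ι : Type u) (F : ι → Set X), (∀ i, IsClosed (F i)) → DiscreteFamily F →
    ∃ G : ι → Set X, (∀ i, IsOpen (G i)) ∧ (∀ i, F i ⊆ G i) ∧ DiscreteFamily G

open Set Filter Topology

/-! ### Discrete families and normality -/

theorem DiscreteFamily.eq_of_mem {X : Type*} [TopologicalSpace X] {ι : Type*} {F : ι → Set X}
    (hF : DiscreteFamily F) {x : X} {i j : ι} (hi : x ∈ F i) (hj : x ∈ F j) : i = j := by
  obtain ⟨U, hU, hs⟩ := hF x
  exact hs ⟨x, hi, mem_of_mem_nhds hU⟩ ⟨x, hj, mem_of_mem_nhds hU⟩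

theorem DiscreteFamily.isClosed_iUnion {X : Type*} [TopologicalSpace X] {ι : Type*}
    {F : ι → Set X} (hF : DiscreteFamily F) (hc : ∀ i, IsClosed (F i)) :
    IsClosed (⋃ i, F i) := by
  refine LocallyFinite.isClosed_iUnion (fun x => ?_) hc
  obtain ⟨U, hU, hs⟩ := hF x
  exact ⟨U, hU, hs.finite⟩

theorem CollectionwiseNormal.normalSpace {X : Type u} [TopologicalSpace X]
    (hX : CollectionwiseNormal X) : NormalSpace X := by
  refine ⟨fun s t hs ht hst => ?_⟩
  obtain ⟨G, hGo, hFG, hGd⟩ := hX.2 (ULift Bool) (fun b => if b.down then s else t)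
    (by intro b; split_ifs <;> assumption) (by
      intro x
      by_cases hx : x ∈ s
      · refine ⟨tᶜ, ht.isOpen_compl.mem_nhds (disjoint_left.1 hst hx), ?_⟩
        rintro ⟨a⟩ ha ⟨b⟩ hb
        cases a <;> cases b <;> simp_all
      · refine ⟨sᶜ, hs.isOpen_compl.mem_nhds hx, ?_⟩
        rintro ⟨a⟩ ha ⟨b⟩ hb
        cases a <;> cases b <;> simp_all)
  refine ⟨G ⟨true⟩, G ⟨false⟩, hGo _, hGo _, by simpa using hFG ⟨true⟩,
    by simpa using hFG ⟨false⟩, disjoint_left.2 fun x h1 h2 => ?_⟩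
  simpa using hGd.eq_of_mem h1 h2

/-! ### Modifying a map along a discrete family -/

/-- The modification step. Let `f` be locally constant at the points of a closed set `Q`. Along a
discrete closed family `D`, the value of `f` on `Q ∩ D i` can be changed to `y i`, provided it can
be joined to `y i` by a path all of whose points are `R`-related to it; the new map is everywhere
`R`-related to the old one. -/
theorem exists_modification {X : Type u} {Y : Type u} [TopologicalSpace X] [TopologicalSpace Y]
    [T1Space Y] (hX : CollectionwiseNormal X) {ι : Type u} (D : ι → Set X)
    (hDc : ∀ i, IsClosed (D i)) (hD : DiscreteFamily D) (y : ι → Y)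
    (Q : Set X) (hQ : IsClosed Q) (f : X → Y) (hf : Continuous f)
    (hloc : ∀ x ∈ Q, ∀ᶠ z in 𝓝 x, f z = f x) (R : Y → Y → Prop) (hR : ∀ a, R a a)
    (hpath : ∀ x ∈ Q, ∀ i, x ∈ D i → ∃ γ : Path (f x) (y i), ∀ t, R (f x) (γ t)) :
    ∃ f' : X → Y, Continuous f' ∧ (∀ x, R (f x) (f' x)) ∧
      ∀ x ∈ Q, ∀ i, x ∈ D i → ∀ᶠ z in 𝓝 x, f' z = y i := by
  classical
  have := hX.normalSpace
  -- The pieces on which both the old value `c` and the new value `y i` are fixed.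
  let P : Y × ι → Set X := fun p => Q ∩ D p.2 ∩ f ⁻¹' {p.1}
  let κ := {p : Y × ι // (P p).Nonempty}
  let F : κ → Set X := fun p => P p.1
  have hFc : ∀ p, IsClosed (F p) := fun p =>
    (hQ.inter (hDc _)).inter (isClosed_singleton.preimage hf)
  have hFd : DiscreteFamily F := by
    intro x
    by_cases hx : x ∈ Q
    · obtain ⟨U, hU, hs⟩ := hD x
      refine ⟨U ∩ {z | f z = f x}, inter_mem hU (hloc x hx), ?_⟩
      rintro ⟨⟨c, i⟩, hp⟩ ⟨a, ⟨⟨ha1, ha2⟩, ha3⟩, ha4, ha5⟩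
        ⟨⟨d, j⟩, hq⟩ ⟨b, ⟨⟨hb1, hb2⟩, hb3⟩, hb4, hb5⟩
      have hij : i = j := hs ⟨a, ha2, ha4⟩ ⟨b, hb2, hb4⟩
      have hcd : c = d := by
        have h1 : f a = c := ha3
        have h2 : f b = d := hb3
        have h3 : f a = f x := ha5
        have h4 : f b = f x := hb5
        rw [← h1, ← h2, h3, h4]
      subst hij hcd
      rfl
    · refine ⟨Qᶜ, hQ.isOpen_compl.mem_nhds hx, ?_⟩
      rintro p ⟨a, ha, ha'⟩
      exact absurd ha.1.1 ha'
  obtain ⟨G, hGo, hFG, hGd⟩ := hX.2 κ F hFc hFd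
  -- Shrink `G` to the open set where `f` is locally constant with the prescribed value.
  let G' : κ → Set X := fun p => G p ∩ {x | ∀ᶠ z in 𝓝 x, f z = p.1.1}
  have hG'o : ∀ p, IsOpen (G' p) := fun p => (hGo p).inter isOpen_setOfPred_eventually_nhds
  have hFG' : ∀ p, F p ⊆ G' p := by
    intro p x hx
    refine ⟨hFG p hx, ?_⟩
    have h1 : f x = p.1.1 := hx.2
    have := hloc x hx.1.1
    rwa [h1] at this
  have hG'f : ∀ p, ∀ x ∈ G' p, f x = p.1.1 := fun p x hx =>
    Eventually.self_of_nhds (p := fun z => f z = p.1.1) hx.2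
  have hG'u : ∀ {p q x}, x ∈ G' p → x ∈ G' q → p = q := fun hp hq => hGd.eq_of_mem hp.1 hq.1
  have hγ : ∀ p : κ, ∃ γ : Path p.1.1 (y p.1.2), ∀ t, R p.1.1 (γ t) := by
    rintro ⟨⟨c, i⟩, x, ⟨hx1, hx2⟩, hx3⟩
    have h1 : f x = c := hx3
    subst h1
    exact hpath x hx1 i hx2
  choose γ hγR using hγ
  have hφ : ∀ p : κ, ∃ W : Set X, IsOpen W ∧ F p ⊆ W ∧ ∃ φ : X → ℝ, Continuous φ ∧
      (∀ x, x ∉ G' p → φ x = 0) ∧ ∀ x ∈ W, φ x = 1 := by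
    intro p
    obtain ⟨W, hWo, hFW, hWG⟩ := normal_exists_closure_subset (hFc p) (hG'o p) (hFG' p)
    obtain ⟨φ, h0, h1, -⟩ := exists_continuous_zero_one_of_isClosed (hG'o p).isClosed_compl
      isClosed_closure (disjoint_left.2 fun x hx hx' => hx (hWG hx'))
    exact ⟨W, hWo, hFW, φ, φ.continuous, fun x hx => h0 hx, fun x hx => h1 (subset_closure hx)⟩
  choose W hWo hFW φ hφc hφ0 hφ1 using hφ
  let h : κ → X → Y := fun p x => if x ∈ G' p then (γ p).extend (φ p x) else f x
  have hh : ∀ p, Continuous (h p) := by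
    intro p
    refine Continuous.if ?_ ((γ p).continuous_extend.comp (hφc p)) hf
    intro a ha
    have ha' : a ∈ frontier (G' p) := ha
    rw [(hG'o p).frontier_eq] at ha'
    have h1 : f a = p.1.1 := by
      have hcl : IsClosed {x | f x = p.1.1} := isClosed_singleton.preimage hf
      exact closure_minimal (fun x hx => hG'f p x hx) hcl ha'.1
    rw [hφ0 p a ha'.2, h1]
    simp
  let f' : X → Y := fun x => if hx : ∃ p, x ∈ G' p then h hx.choose x else f x
  have hf'1 : ∀ p x, x ∈ G' p → f' x = (γ p).extend (φ p x) := by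
    intro p x hx
    have hex : ∃ p, x ∈ G' p := ⟨p, hx⟩
    have hp : hex.choose = p := hG'u hex.choose_spec hx
    have h1 : f' x = h hex.choose x := dif_pos hex
    rw [h1, hp]
    exact if_pos hx
  have hf'2 : ∀ x, (∀ p, x ∉ G' p) → f' x = f x := by
    intro x hx
    have : ¬ ∃ p, x ∈ G' p := by simpa using hx
    simp only [f', dif_neg this]
  refine ⟨f', ?_, ?_, ?_⟩
  · rw [continuous_iff_continuousAt]
    intro x
    obtain ⟨U, hU, hs⟩ := hGd x
    by_cases hne : ∃ p, (G' p ∩ U).Nonempty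
    · obtain ⟨p, a, ha, haU⟩ := hne
      refine ((hh p).continuousAt (x := x)).congr ?_
      filter_upwards [hU] with z hz
      by_cases hzp : z ∈ G' p
      · rw [hf'1 p z hzp]
        simp only [h, if_pos hzp]
      · rw [hf'2 z]
        · simp only [h, if_neg hzp]
        · intro q hq
          have : q = p := hs ⟨z, hq.1, hz⟩ ⟨a, ha.1, haU⟩
          exact hzp (this ▸ hq)
    · refine (hf.continuousAt (x := x)).congr ?_
      filter_upwards [hU] with z hz
      exact (hf'2 z fun p hp => hne ⟨p, z, hp, hz⟩).symm
  · intro x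
    by_cases hx : ∃ p, x ∈ G' p
    · obtain ⟨p, hp⟩ := hx
      rw [hf'1 p x hp, hG'f p x hp]
      exact hγR p _
    · rw [hf'2 x (by simpa using hx)]
      exact hR _
  · intro x hxQ i hxi
    have hxP : x ∈ P (f x, i) := ⟨⟨hxQ, hxi⟩, rfl⟩
    let p : κ := ⟨(f x, i), x, hxP⟩
    filter_upwards [(hWo p).mem_nhds (hFW p hxP), (hG'o p).mem_nhds (hFG' p hxP)] with z hz1 hz2
    rw [hf'1 p z hz2, hφ1 p z hz1]
    simp [p]

/-! ### Discrete closed refinements -/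

/-- Stone's construction: an open cover of a metrizable space has a sequence of shrinkings to
discrete families of closed sets such that each point is covered from some index on. -/
theorem exists_discrete_refinement {Y : Type*} [TopologicalSpace Y]
    [TopologicalSpace.MetrizableSpace Y] {ι : Type*} (V : ι → Set Y)
    (hVo : ∀ e, IsOpen (V e)) (hV : ∀ x, ∃ e, x ∈ V e) :
    ∃ C : ℕ → ι → Set Y, (∀ n e, IsClosed (C n e)) ∧ (∀ n, DiscreteFamily (C n)) ∧
      (∀ n e, C n e ⊆ V e) ∧ ∀ x, ∀ᶠ n in atTop, ∃ e, x ∈ C n e := by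
  let := TopologicalSpace.metrizableSpaceMetric Y
  have hδ : ∀ n : ℕ, (0 : ℝ) < 1 / (n + 1) := fun n => Nat.one_div_pos_of_nat
  have hwf : WellFounded (WellOrderingRel : ι → ι → Prop) := WellOrderingRel.isWellOrder.wf
  refine ⟨fun n e => (Metric.thickening (1 / ((n : ℝ) + 1)) (V e)ᶜ)ᶜ ∩
    (⋃ j ∈ {j | WellOrderingRel j e}, V j)ᶜ, ?_, ?_, ?_, ?_⟩
  · intro n e
    exact Metric.isOpen_thickening.isClosed_compl.inter
      (isOpen_biUnion fun j _ => hVo j).isClosed_compl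
  · intro n
    -- A point of the piece of `i` is at distance at least `1 / (n + 1)` from every later piece.
    have key : ∀ i j : ι, WellOrderingRel i j → ∀ a b : Y,
        a ∉ Metric.thickening (1 / ((n : ℝ) + 1)) (V i)ᶜ →
        b ∉ (⋃ k ∈ {k | WellOrderingRel k j}, V k) → 1 / ((n : ℝ) + 1) ≤ dist a b := by
      intro i j hij a b ha hb
      by_contra hlt
      push Not at hlt
      refine ha (Metric.mem_thickening_iff.2 ⟨b, fun hbi => hb ?_, hlt⟩)
      exact mem_biUnion (show i ∈ {k | WellOrderingRel k j} from hij) hbi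
    intro x
    refine ⟨Metric.ball x (1 / ((n : ℝ) + 1) / 2), Metric.ball_mem_nhds x (half_pos (hδ n)), ?_⟩
    rintro i ⟨a, ⟨ha1, ha2⟩, ha3⟩ j ⟨b, ⟨hb1, hb2⟩, hb3⟩
    have hab : dist a b < 1 / ((n : ℝ) + 1) := by
      have := dist_triangle_right a b x
      rw [Metric.mem_ball] at ha3 hb3
      linarith
    rcases trichotomous_of (WellOrderingRel : ι → ι → Prop) i j with hij | hij | hij
    · exact absurd (key i j hij a b ha1 hb2) (not_le.2 hab)
    · exact hij
    · exact absurd (key j i hij b a hb1 ha2) (not_le.2 (by rwa [dist_comm]))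
  · rintro n e x ⟨hx, -⟩
    by_contra hxe
    exact hx (Metric.self_subset_thickening (hδ n) _ hxe)
  · intro x
    obtain ⟨e, he, hmin⟩ := hwf.has_min {e | x ∈ V e} (hV x)
    obtain ⟨ε, hε, hball⟩ := Metric.isOpen_iff.1 (hVo e) x he
    filter_upwards [(tendsto_one_div_add_atTop_nhds_zero_nat (𝕜 := ℝ)).eventually_lt_const hε]
      with n hn
    refine ⟨e, fun hx => ?_, fun hx => ?_⟩
    · obtain ⟨z, hz, hxz⟩ := Metric.mem_thickening_iff.1 hx
      exact hz (hball (Metric.mem_ball'.2 (hxz.trans hn)))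
    · obtain ⟨j, hj, hxj⟩ := mem_iUnion₂.1 hx
      exact hmin j hxj hj

/-- Discrete closed families of `X`, refining through `r` an open cover of the ambiguous set `E`,
and covering each point of `X` from some index on. The index `none` is used for the pieces of the
complement of `E`, where `r` takes the value `x₀`. -/
theorem exists_level_families {X : Type u} [TopologicalSpace X] (E : Set X)
    (hmetr : TopologicalSpace.MetrizableSpace E)
    (hFsigma : IsFsigma E) (hGdelta : IsGδ E) (x₀ : E) (r : X → E)
    (hr : ∀ x (hx : x ∈ E), r x = ⟨x, hx⟩) (hr₀ : ∀ x, x ∉ E → r x = x₀)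
    (V : E → Set E) (hVo : ∀ e, IsOpen (V e)) (hV : ∀ e, e ∈ V e) :
    ∃ D : ℕ → Option E → Set X, (∀ n i, IsClosed (D n i)) ∧ (∀ n, DiscreteFamily (D n)) ∧
      (∀ n i x, x ∈ D n i → r x ∈ V (i.getD x₀)) ∧ ∀ x, ∀ᶠ n in atTop, ∃ i, x ∈ D n i := by
  obtain ⟨C, hCc, hCd, hCV, hC⟩ := exists_discrete_refinement V hVo fun x => ⟨x, hV x⟩
  obtain ⟨A, hAc, hAE⟩ := hFsigma
  obtain ⟨B, hBo, hBE⟩ := isGδ_iff_eq_iInter_nat.1 hGdelta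
  -- Increasing closed sets exhausting `E` and its complement.
  let K : ℕ → Set X := fun n => ⋃ m ∈ Iic n, A m
  let H : ℕ → Set X := fun n => ⋃ m ∈ Iic n, (B m)ᶜ
  have hKc : ∀ n, IsClosed (K n) := fun n => (finite_Iic n).isClosed_biUnion fun m _ => hAc m
  have hHc : ∀ n, IsClosed (H n) := fun n =>
    (finite_Iic n).isClosed_biUnion fun m _ => (hBo m).isClosed_compl
  have hKE : ∀ n, K n ⊆ E := by
    intro n x hx
    obtain ⟨m, -, hm⟩ := mem_iUnion₂.1 hx
    rw [hAE]
    exact mem_iUnion.2 ⟨m, hm⟩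
  have hHE : ∀ n x, x ∈ H n → x ∉ E := by
    intro n x hx hxE
    obtain ⟨m, -, hm⟩ := mem_iUnion₂.1 hx
    rw [hBE] at hxE
    exact hm (mem_iInter.1 hxE m)
  have hKx : ∀ x ∈ E, ∀ᶠ n in atTop, x ∈ K n := by
    intro x hx
    rw [hAE] at hx
    obtain ⟨m, hm⟩ := mem_iUnion.1 hx
    filter_upwards [eventually_ge_atTop m] with n hn
    exact mem_biUnion (show m ∈ Iic n from hn) hm
  have hHx : ∀ x, x ∉ E → ∀ᶠ n in atTop, x ∈ H n := by
    intro x hx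
    rw [hBE, mem_iInter, not_forall] at hx
    obtain ⟨m, hm⟩ := hx
    filter_upwards [eventually_ge_atTop m] with n hn
    exact mem_biUnion (show m ∈ Iic n from hn) hm
  let D : ℕ → Option E → Set X := fun n i => i.elim (H n) fun e => K n ∩ (↑) '' (C n e)
  have hDE : ∀ n (e : E), D n (some e) ⊆ K n := fun n e => inter_subset_left
  have hCc' : ∀ n e, ∃ T : Set X, IsClosed T ∧ (↑) ⁻¹' T = C n e := fun n e =>
    isClosed_induced_iff.1 (hCc n e)
  refine ⟨D, ?_, ?_, ?_, ?_⟩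
  · rintro n (_ | e)
    · exact hHc n
    · obtain ⟨T, hT, hTC⟩ := hCc' n e
      have : D n (some e) = K n ∩ T := by
        ext x
        constructor
        · rintro ⟨hx, z, hz, rfl⟩
          rw [← hTC] at hz
          exact ⟨hx, hz⟩
        · rintro ⟨hx, hxT⟩
          refine ⟨hx, ⟨x, hKE n hx⟩, ?_, rfl⟩
          rw [← hTC]
          exact hxT
      rw [this]
      exact (hKc n).inter hT
  · intro n x
    by_cases hx : x ∈ K n
    · obtain ⟨U, hU, hs⟩ := hCd n ⟨x, hKE n hx⟩
      obtain ⟨U', hU', hUU'⟩ := mem_nhds_subtype E _ _ |>.1 hU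
      have hxH : x ∉ H n := fun h => hHE n x h (hKE n hx)
      refine ⟨U' ∩ (H n)ᶜ, inter_mem hU' ((hHc n).isOpen_compl.mem_nhds hxH), ?_⟩
      rintro (_ | e) ⟨a, ha, haU, haH⟩ (_ | e') ⟨b, hb, hbU, hbH⟩
      · rfl
      · exact absurd ha haH
      · exact absurd hb hbH
      · obtain ⟨-, a, ha, rfl⟩ := ha
        obtain ⟨-, b, hb, rfl⟩ := hb
        rw [hs ⟨a, ha, hUU' haU⟩ ⟨b, hb, hUU' hbU⟩]
    · refine ⟨(K n)ᶜ, (hKc n).isOpen_compl.mem_nhds hx, ?_⟩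
      rintro (_ | e) ⟨a, ha, haU⟩ (_ | e') ⟨b, hb, hbU⟩
      · rfl
      · exact absurd (hDE n _ hb) hbU
      · exact absurd (hDE n _ ha) haU
      · exact absurd (hDE n _ ha) haU
  · rintro n (_ | e) x hx
    · rw [hr₀ x (hHE n x hx)]
      exact hV x₀
    · obtain ⟨-, z, hz, rfl⟩ := hx
      rw [hr _ z.2]
      exact hCV n e hz
  · intro x
    by_cases hx : x ∈ E
    · filter_upwards [hKx x hx, hC ⟨x, hx⟩] with n hn hn'
      obtain ⟨e, he⟩ := hn'
      exact ⟨some e, hn, ⟨x, hx⟩, he, rfl⟩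
    · filter_upwards [hHx x hx] with n hn
      exact ⟨none, hn⟩

/-! ### Construction of the approximating maps -/

/-- One stage of the construction: given one discrete closed family per level, there are continuous
maps `f 0, f 1, …` that change little from level to level, such that `r x` lies in the member
`V k (f k x)` of the level `k` cover whenever `x` belongs to `⋃ i, D j i` for all `j < k`. Since
`V 0` is trivial, `D k` refines the cover of level `k + 1`. -/
theorem exists_stage {X : Type u} [TopologicalSpace X] (hX : CollectionwiseNormal X)
    {Y : Type u} [MetricSpace Y] [PathConnectedSpace Y] {ι : Type u} (y : ι → Y) (x₀ : Y)
    (r : X → Y) (V : ℕ → Y → Set Y) (hV0 : ∀ e, V 0 e = univ)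
    (hVp : ∀ k e, IsPathConnected (V k e)) (hVe : ∀ k e, e ∈ V k e)
    (hVb : ∀ k, 1 ≤ k → ∀ e, V k e ⊆ Metric.ball e ((1 / 2) ^ k))
    (D : ℕ → ι → Set X) (hDc : ∀ k i, IsClosed (D k i)) (hDd : ∀ k, DiscreteFamily (D k))
    (hDr : ∀ k i x, x ∈ D k i → r x ∈ V (k + 1) (y i)) :
    ∃ f : ℕ → X → Y, (∀ k, Continuous (f k)) ∧
      (∀ k, 1 ≤ k → ∀ x, dist (f k x) (f (k + 1) x) ≤ 2 * (1 / 2) ^ k) ∧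
      ∀ k x, (∀ j < k, ∃ i, x ∈ D j i) → r x ∈ V k (f k x) := by
  let Q : ℕ → Set X := fun k => ⋂ j ∈ Iio k, ⋃ i, D j i
  have hQc : ∀ k, IsClosed (Q k) := fun k =>
    isClosed_biInter fun j _ => (hDd j).isClosed_iUnion (hDc j)
  let Inv : ℕ → (X → Y) → Prop := fun k f => Continuous f ∧
    ∀ x ∈ Q k, (∀ᶠ z in 𝓝 x, f z = f x) ∧ r x ∈ V k (f x)
  have step : ∀ k (f : {f // Inv k f}), ∃ f' : {f' // Inv (k + 1) f'},
      ∀ x, 1 ≤ k → dist (f.1 x) (f'.1 x) ≤ 2 * (1 / 2) ^ k := by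
    rintro k ⟨f, hfc, hf⟩
    obtain ⟨f', hf'c, hf'R, hf'⟩ := exists_modification hX (D k) (hDc k) (hDd k) y (Q k) (hQc k)
      f hfc (fun x hx => (hf x hx).1) (fun a b => 1 ≤ k → dist a b ≤ 2 * (1 / 2) ^ k)
      (fun a _ => by rw [dist_self]; positivity) (by
        intro x hx i hxi
        -- Both path-connected sets contain `r x`.
        have hU : IsPathConnected (V k (f x) ∪ V (k + 1) (y i)) :=
          (hVp _ _).union (hVp _ _) ⟨r x, (hf x hx).2, hDr k i x hxi⟩
        obtain ⟨γ, hγ⟩ := hU.joinedIn _ (Or.inl (hVe _ _)) _ (Or.inr (hVe _ _))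
        refine ⟨γ, fun t hk => ?_⟩
        have hpow : (0 : ℝ) < (1 / 2) ^ k := by positivity
        rcases hγ t with h | h
        · have := Metric.mem_ball'.1 (hVb k hk _ h)
          linarith
        · have h1 := Metric.mem_ball.1 (hVb (k + 1) (by omega) _ h)
          have h2 := Metric.mem_ball'.1 (hVb (k + 1) (by omega) _ (hDr k i x hxi))
          have h3 := Metric.mem_ball'.1 (hVb k hk _ (hf x hx).2)
          have h4 := dist_triangle4 (f x) (r x) (y i) (γ t)
          rw [dist_comm (γ t)] at h1
          rw [dist_comm (y i) (r x)] at h2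
          rw [pow_succ] at h1 h2
          linarith)
    refine ⟨⟨f', hf'c, fun x hx => ?_⟩, hf'R⟩
    have hxQ : x ∈ Q k := by
      refine mem_iInter₂.2 fun j hj => mem_iInter₂.1 hx j ?_
      exact Nat.lt_succ_of_lt hj
    obtain ⟨i, hi⟩ := mem_iUnion.1 (mem_iInter₂.1 hx k (Nat.lt_succ_self k))
    have h := hf' x hxQ i hi
    have hx' : f' x = y i := h.self_of_nhds
    rw [hx']
    exact ⟨h, hDr k i x hi⟩
  choose next hnext using step
  have inv0 : Inv 0 fun _ => x₀ :=
    ⟨continuous_const, fun x _ => ⟨Eventually.of_forall fun _ => rfl, by rw [hV0]; trivial⟩⟩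
  let f : ∀ k, {f // Inv k f} := fun k => Nat.rec ⟨_, inv0⟩ next k
  refine ⟨fun k => (f k).1, fun k => (f k).2.1, fun k hk x => hnext k (f k) x hk, ?_⟩
  intro k x hx
  exact ((f k).2.2 x (mem_iInter₂.2 fun j hj => mem_iUnion.2 (hx j hj))).2

theorem b1_retract_of_collectionwise_normal_ambiguous {X : Type u} [TopologicalSpace X]
    (hX : CollectionwiseNormal X) (E : Set X)
    (hmetr : TopologicalSpace.MetrizableSpace E)
    (harc : PathConnectedSpace E) (hlocarc : LocPathConnectedSpace E)
    (hFsigma : IsFsigma E) (hGdelta : IsGδ E) :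
    IsB1Retract E := by
  classical
  let := TopologicalSpace.metrizableSpaceMetric E
  have : LocallyPathConnectedSpace E := hlocarc
  obtain ⟨x₀⟩ := harc.nonempty
  let r : X → E := fun x => if hx : x ∈ E then ⟨x, hx⟩ else x₀
  have hr : ∀ x (hx : x ∈ E), r x = ⟨x, hx⟩ := fun x hx => dif_pos hx
  have hr₀ : ∀ x, x ∉ E → r x = x₀ := fun x hx => dif_neg hx
  have hVex : ∀ (k : ℕ) (e : E), ∃ V : Set E, (k = 0 → V = univ) ∧ IsOpen V ∧ e ∈ V ∧
      IsPathConnected V ∧ (1 ≤ k → V ⊆ Metric.ball e ((1 / 2) ^ k)) := by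
    rintro (_ | k) e
    · exact ⟨univ, fun _ => rfl, isOpen_univ, mem_univ _, isPathConnected_univ, by simp⟩
    · obtain ⟨V, ⟨hVo, heV, hVp⟩, hVb⟩ := (isOpen_isPathConnected_basis e).mem_iff.1
        (Metric.ball_mem_nhds e (by positivity : (0 : ℝ) < (1 / 2) ^ (k + 1)))
      exact ⟨V, by simp, hVo, heV, hVp, fun _ => hVb⟩
  choose V hV0 hVo hVe hVp hVb using hVex
  have hfam := fun k => exists_level_families E hmetr hFsigma hGdelta x₀ r hr hr₀ (V (k + 1))
    (hVo _) (hVe _)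
  choose D hDc hDd hDr hD using hfam
  have hstage := fun n => exists_stage hX (fun i : Option E => i.getD x₀) x₀ r V
    (fun e => hV0 0 e rfl) hVp hVe (fun k hk e => hVb k e hk) (fun k => D k n)
    (fun k => hDc k n) (fun k => hDd k n) (fun k => hDr k n)
  choose f hfc hfd hfr using hstage
  refine ⟨r, ⟨fun n => f n n, fun n => hfc n n, fun x => ?_⟩, fun x hx => by rw [hr x hx]⟩
  -- Summing the geometric series of the level-to-level changes.
  have htail : ∀ n k, 1 ≤ k → ∀ m, k ≤ m →
      dist (f n k x) (f n m x) ≤ 4 * ((1 / 2) ^ k - (1 / 2) ^ m) := by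
    intro n k hk m hm
    induction m, hm using Nat.le_induction with
    | base => simp
    | succ m hm ih =>
      have h1 := hfd n m (hk.trans hm) x
      have h2 := dist_triangle (f n k x) (f n m x) (f n (m + 1) x)
      rw [pow_succ]
      linarith
  rw [Metric.tendsto_atTop']
  intro ε hε
  have hlim : Tendsto (fun k : ℕ => 5 * (1 / 2 : ℝ) ^ k) atTop (𝓝 0) := by
    simpa using (tendsto_pow_atTop_nhds_zero_of_lt_one (by norm_num : (0 : ℝ) ≤ 1 / 2)
      (by norm_num)).const_mul 5
  obtain ⟨k, hkε, hk⟩ := ((hlim.eventually_lt_const hε).and (eventually_ge_atTop 1)).exists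
  have hcov : ∀ᶠ n in atTop, ∀ j ∈ Iio k, ∃ i, x ∈ D j n i :=
    (eventually_all_finite (finite_Iio k)).2 fun j _ => hD j x
  obtain ⟨N, hN⟩ := eventually_atTop.1 (hcov.and (eventually_ge_atTop k))
  refine ⟨N, fun n hn => ?_⟩
  obtain ⟨hn1, hn2⟩ := hN n hn.le
  have h1 := Metric.mem_ball'.1 (hVb k _ hk (hfr n k x hn1))
  have h2 := htail n k hk n hn2
  have h3 := dist_triangle_left (f n n x) (r x) (f n k x)
  have h4 : (0 : ℝ) < (1 / 2) ^ n := by positivity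
  linarith
end

section
/- Let E = ({0} × [0,1]) ∪ ⋃_{n=1}^∞ ( ({1/n} × [0,1]) ∪ ([1/(2n), 1/(2n−1)] × {1}) ∪ ([1/(2n+1), 1/(2n)] × {0}) ) ⊆ [0,1]². Then E is a closed connected subset of [0,1]². -/
/-!
The horizontal segments of `combSet` alternate between the top and the bottom edge, so the set is
`{0} × [0,1]` together with a chain of links `combLink m`: the tooth at `1/(m+1)` followed by the
horizontal segment leading to the next tooth (`combSet_eq`).

*Closed*: the `m`-th link lies in the strip `[0, 1/(m+1)] × [0,1]`, so `combSet` is the intersection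
over `N` of the closed sets "first `N` links, together with the strip `[0, 1/(N+1)] × [0,1]`".

*Connected*: each link is connected and meets the next one, so the union of all links is connected.
The teeth accumulate at every point of `{0} × [0,1]`, hence `combSet` lies between this union and
its closure.
-/

/-- The "comb" set
`E = ({0}×[0,1]) ∪ ⋃ₙ (({1/n}×[0,1]) ∪ ([1/(2n),1/(2n−1)]×{1}) ∪ ([1/(2n+1),1/(2n)]×{0}))`,
where `n` ranges over `{1, 2, 3, …}`. -/
def combSet : Set (ℝ × ℝ) :=
  ({0} ×ˢ Set.Icc (0 : ℝ) 1) ∪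
    ⋃ n : ℕ, (({1 / ((n : ℝ) + 1)} ×ˢ Set.Icc (0 : ℝ) 1) ∪
      (Set.Icc (1 / (2 * ((n : ℝ) + 1))) (1 / (2 * ((n : ℝ) + 1) - 1)) ×ˢ {(1 : ℝ)}) ∪
      (Set.Icc (1 / (2 * ((n : ℝ) + 1) + 1)) (1 / (2 * ((n : ℝ) + 1))) ×ˢ {(0 : ℝ)}))

/-- The `m`-th link of the comb: the tooth at `1/(m+1)` and the horizontal segment over
`[1/(m+2), 1/(m+1)]`, at height `1` for even `m` and height `0` for odd `m`. -/
def combLink (m : ℕ) : Set (ℝ × ℝ) :=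
  ({1 / ((m : ℝ) + 1)} ×ˢ Set.Icc (0 : ℝ) 1) ∪
    (Set.Icc (1 / ((m : ℝ) + 2)) (1 / ((m : ℝ) + 1)) ×ˢ {if Even m then (1 : ℝ) else 0})

lemma combLink_height_mem (m : ℕ) : (if Even m then (1 : ℝ) else 0) ∈ Set.Icc (0 : ℝ) 1 := by
  split_ifs <;> simp

lemma one_div_add_two_le (m : ℕ) : 1 / ((m : ℝ) + 2) ≤ 1 / ((m : ℝ) + 1) :=
  one_div_le_one_div_of_le (by positivity) (by linarith)

lemma combSet_eq : combSet = ({0} ×ˢ Set.Icc (0 : ℝ) 1) ∪ ⋃ m, combLink m := by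
  have even_left (n : ℕ) : ((2 * n : ℕ) : ℝ) + 2 = 2 * ((n : ℝ) + 1) := by push_cast; ring
  have even_right (n : ℕ) : ((2 * n : ℕ) : ℝ) + 1 = 2 * ((n : ℝ) + 1) - 1 := by push_cast; ring
  have odd_left (n : ℕ) : ((2 * n + 1 : ℕ) : ℝ) + 2 = 2 * ((n : ℝ) + 1) + 1 := by push_cast; ring
  have odd_right (n : ℕ) : ((2 * n + 1 : ℕ) : ℝ) + 1 = 2 * ((n : ℝ) + 1) := by push_cast; ring
  unfold combSet
  congr 1
  apply Set.Subset.antisymm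
  · refine Set.iUnion_subset fun n => Set.union_subset (Set.union_subset ?_ ?_) ?_
    · exact Set.subset_iUnion_of_subset n Set.subset_union_left
    · refine Set.subset_iUnion_of_subset (2 * n) ?_
      rw [combLink, even_left, even_right, if_pos (even_two_mul n)]
      exact Set.subset_union_right
    · refine Set.subset_iUnion_of_subset (2 * n + 1) ?_
      rw [combLink, odd_left, odd_right, if_neg (by simp)]
      exact Set.subset_union_right
  · refine Set.iUnion_subset fun m => Set.union_subset ?_ ?_
    · exact Set.subset_iUnion_of_subset m fun p hp => Or.inl (Or.inl hp)
    · obtain ⟨n, rfl | rfl⟩ := Nat.even_or_odd' m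
      · rw [even_left, even_right, if_pos (even_two_mul n)]
        exact Set.subset_iUnion_of_subset n fun p hp => Or.inl (Or.inr hp)
      · rw [odd_left, odd_right, if_neg (by simp)]
        exact Set.subset_iUnion_of_subset n fun p hp => Or.inr hp

lemma combLink_subset (m : ℕ) :
    combLink m ⊆ Set.Icc (0 : ℝ) (1 / ((m : ℝ) + 1)) ×ˢ Set.Icc (0 : ℝ) 1 := by
  have h0 : (0 : ℝ) ≤ 1 / ((m : ℝ) + 1) := by positivity
  have h1 : (0 : ℝ) ≤ 1 / ((m : ℝ) + 2) := by positivity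
  refine Set.union_subset (Set.prod_mono ?_ subset_rfl) (Set.prod_mono ?_ ?_)
  · exact Set.singleton_subset_iff.2 ⟨h0, le_rfl⟩
  · exact Set.Icc_subset_Icc_left h1
  · exact Set.singleton_subset_iff.2 (combLink_height_mem m)

lemma isClosed_combLink (m : ℕ) : IsClosed (combLink m) :=
  (isClosed_singleton.prod isClosed_Icc).union (isClosed_Icc.prod isClosed_singleton)

lemma isPreconnected_combLink (m : ℕ) : IsPreconnected (combLink m) :=
  IsPreconnected.union (1 / ((m : ℝ) + 1), if Even m then (1 : ℝ) else 0)
    ⟨rfl, combLink_height_mem m⟩ ⟨⟨one_div_add_two_le m, le_rfl⟩, rfl⟩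
    (isPreconnected_singleton.prod isPreconnected_Icc)
    (isPreconnected_Icc.prod isPreconnected_singleton)

/-- Consecutive links meet where the segment of the first reaches the tooth of the second. -/
lemma combLink_inter_succ (m : ℕ) : (combLink m ∩ combLink (m + 1)).Nonempty := by
  refine ⟨(1 / ((m : ℝ) + 2), if Even m then (1 : ℝ) else 0),
    Or.inr ⟨⟨le_rfl, one_div_add_two_le m⟩, rfl⟩, Or.inl ⟨?_, combLink_height_mem m⟩⟩
  rw [Set.mem_singleton_iff]
  push_cast
  ring

lemma isPreconnected_iUnion_combLink : IsPreconnected (⋃ m, combLink m) :=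
  IsPreconnected.iUnion_of_chain isPreconnected_combLink combLink_inter_succ

lemma spine_subset_closure : ({0} ×ˢ Set.Icc (0 : ℝ) 1) ⊆ closure (⋃ m, combLink m) := by
  rintro ⟨x, y⟩ ⟨hx, hy⟩
  obtain rfl : x = 0 := hx
  refine mem_closure_of_tendsto
    ((tendsto_one_div_add_atTop_nhds_zero_nat (𝕜 := ℝ)).prodMk_nhds
      (tendsto_const_nhds (x := y)))
    (Filter.Eventually.of_forall fun m => Set.mem_iUnion.2 ⟨m, Or.inl ⟨rfl, hy⟩⟩)

lemma combSet_eq_iInter : combSet = ⋂ N : ℕ, ((⋃ m ∈ Finset.range N, combLink m) ∪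
    Set.Icc (0 : ℝ) (1 / ((N : ℝ) + 1)) ×ˢ Set.Icc (0 : ℝ) 1) := by
  rw [combSet_eq]
  apply Set.Subset.antisymm
  · refine Set.subset_iInter fun N => Set.union_subset ?_ (Set.iUnion_subset fun m => ?_)
    · refine Set.subset_union_of_subset_right (Set.prod_mono ?_ subset_rfl) _
      exact Set.singleton_subset_iff.2 ⟨le_rfl, by positivity⟩
    · rcases lt_or_ge m N with h | h
      · exact Set.subset_union_of_subset_left
          (Set.subset_biUnion_of_mem (u := combLink) (Finset.mem_coe.2 (Finset.mem_range.2 h))) _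
      · refine Set.subset_union_of_subset_right ((combLink_subset m).trans ?_) _
        exact Set.prod_mono (Set.Icc_subset_Icc_right (Nat.one_div_le_one_div h)) subset_rfl
  · intro p hp
    rw [Set.mem_iInter] at hp
    by_cases hA : p ∈ ⋃ m, combLink m
    · exact Or.inr hA
    have hstrip (N : ℕ) : p ∈ Set.Icc (0 : ℝ) (1 / ((N : ℝ) + 1)) ×ˢ Set.Icc (0 : ℝ) 1 := by
      refine (hp N).resolve_left fun h => hA ?_
      obtain ⟨m, -, hm⟩ := Set.mem_iUnion₂.1 h
      exact Set.mem_iUnion.2 ⟨m, hm⟩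
    refine Or.inl ⟨le_antisymm ?_ (hstrip 0).1.1, (hstrip 0).2⟩
    exact ge_of_tendsto' tendsto_one_div_add_atTop_nhds_zero_nat fun N => (hstrip N).1.2

lemma isClosed_combSet : IsClosed combSet := by
  rw [combSet_eq_iInter]
  exact isClosed_iInter fun N =>
    (isClosed_biUnion_finset fun m _ => isClosed_combLink m).union (isClosed_Icc.prod isClosed_Icc)

lemma isConnected_combSet : IsConnected combSet := by
  rw [combSet_eq]
  refine ⟨⟨(0, 0), Or.inl (by simp)⟩, isPreconnected_iUnion_combLink.subset_closure
    Set.subset_union_right (Set.union_subset spine_subset_closure subset_closure)⟩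

lemma combSet_subset_square : combSet ⊆ Set.Icc (0 : ℝ) 1 ×ˢ Set.Icc (0 : ℝ) 1 := by
  rw [combSet_eq_iInter]
  exact (Set.iInter_subset _ 0).trans (by simp)

theorem combSet_isClosed_isConnected :
    IsClosed (Subtype.val ⁻¹' combSet :
      Set (Set.Icc (0 : ℝ) 1 ×ˢ Set.Icc (0 : ℝ) 1 : Set (ℝ × ℝ))) ∧
    IsConnected (Subtype.val ⁻¹' combSet :
      Set (Set.Icc (0 : ℝ) 1 ×ˢ Set.Icc (0 : ℝ) 1 : Set (ℝ × ℝ))) := by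
  refine ⟨isClosed_combSet.preimage continuous_subtype_val, ?_, ?_⟩
  · obtain ⟨p, hp⟩ := isConnected_combSet.nonempty
    exact ⟨⟨p, combSet_subset_square hp⟩, hp⟩
  · rw [← Topology.IsInducing.subtypeVal.isPreconnected_image, Subtype.image_preimage_coe,
      Set.inter_eq_right.2 combSet_subset_square]
    exact isConnected_combSet.isPreconnected
end
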